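/- arXiv:2103.16458 — 2 statements merged into one kernel-verified Lean document; each statement's English description precedes it below -/
import Mathlib

section
/- Let n ≥ 2, let f : ℂⁿ → ℂ be holomorphic, and let p ∈ ℂⁿ with f(p) ≠ 0 and df(p) = 0 (all first-order complex partial derivatives of f vanish at p). Then for EVERY holomorphic map X from an open neighborhood of p to ℂⁿ with X(p) ≠ 0, and every holomorphic Z : B(0,ε) → ℂⁿ with Z(0) = p, Z′(T) = X(Z(T)), and f(Z(T)) ≠ 0 for all T ∈ B(0,ε), the function h(T) = (1 + |f(Z(T))|²·u(|f(Z(T))|²)²)·|df(Z(T))(X(Z(T)))|² + ‖X(Z(T))‖² satisfies h(0)·(∂∂̄h)(0) − (∂h)(0)·(∂̄h)(0) ≥ 0, i.e., the Gaussian curvature of h(T)|dT|² at T = 0 is ≤ 0. -/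
open Complex Filter Topology Metric
open scoped ComplexOrder

/-- The function `u(t) = (t-1)/(t log t)` for `t ≠ 1`, extended by `u(1) = 1`. -/
noncomputable def u (t : ℝ) : ℝ := if t = 1 then 1 else (t - 1) / (t * Real.log t)

/-- Wirtinger derivative `∂g` of a complex-valued function on `ℂ` (real-differentiable sense). -/
noncomputable def wdz (g : ℂ → ℂ) (z : ℂ) : ℂ :=
  (fderiv ℝ g z 1 - Complex.I * fderiv ℝ g z Complex.I) / 2

/-- Wirtinger derivative `∂̄g` of a complex-valued function on `ℂ`. -/
noncomputable def wdzbar (g : ℂ → ℂ) (z : ℂ) : ℂ :=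
  (fderiv ℝ g z 1 + Complex.I * fderiv ℝ g z Complex.I) / 2

/-- `∂h` for a real-valued `h`. -/
noncomputable def wdzR (h : ℂ → ℝ) : ℂ → ℂ := wdz fun w => (h w : ℂ)

/-- `∂̄h` for a real-valued `h`. -/
noncomputable def wdzbarR (h : ℂ → ℝ) : ℂ → ℂ := wdzbar fun w => (h w : ℂ)

/-- `∂∂̄h` for a real-valued `h`. -/
noncomputable def wlapR (h : ℂ → ℝ) : ℂ → ℂ := wdz (wdzbarR h)

/-- The numerator `h·∂∂̄h − ∂h·∂̄h` of (−1/2 times) the Gaussian curvature of `h|dz|²`. -/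
noncomputable def curvNum (h : ℂ → ℝ) (z : ℂ) : ℂ :=
  (h z : ℂ) * wlapR h z - wdzR h z * wdzbarR h z

/-- The Gaussian curvature `K = −2(h·∂∂̄h − ∂h·∂̄h)/h³` of the conformal metric `h|dz|²`. -/
noncomputable def gaussCurv (h : ℂ → ℝ) (z : ℂ) : ℂ :=
  -2 * curvNum h z / (h z : ℂ) ^ 3

/-!
Along a leaf `Z` the density is `h = a ‖g‖² + ‖Y‖²`, where `Y = X ∘ Z` and `g = (f ∘ Z)′` are
holomorphic, `a > 0` is smooth, and `g` vanishes at the base point because `df` does. Since `g = 0`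
there, only first derivatives of `g` survive in the second derivatives of `a ‖g‖²`, and
`h ∂∂̄h − ∂h ∂̄h = a ‖g′‖² ‖Y‖² + (‖Y‖² ‖Y′‖² − |⟪Y, Y′⟫|²)`,
which is nonnegative by Cauchy-Schwarz.
-/

open scoped InnerProductSpace

section Wirtinger

/-- The function `g` is real differentiable at `z` with Wirtinger derivatives `∂g = a` and
`∂̄g = b`; its differential is then `v ↦ a v + b v̄`. Unlike `wdz` and `wdzbar`, which take junk
values where `g` is not differentiable, this relation is stable under the rules of calculus. -/
def HasWirtingerDerivAt (g : ℂ → ℂ) (a b z : ℂ) : Prop :=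
  HasFDerivAt g (a • ContinuousLinearMap.id ℝ ℂ + b • (conjCLE : ℂ →L[ℝ] ℂ)) z

namespace HasWirtingerDerivAt

variable {g k : ℂ → ℂ} {a b c d z : ℂ}

lemma wdz_eq (h : HasWirtingerDerivAt g a b z) : wdz g z = a := by
  simp only [wdz, h.fderiv, _root_.add_apply, _root_.smul_apply, ContinuousLinearMap.id_apply,
    ContinuousLinearEquiv.coe_coe, conjCLE_apply, map_one, conj_I, smul_eq_mul]
  linear_combination (b / 2 - a / 2) * I_mul_I

lemma wdzbar_eq (h : HasWirtingerDerivAt g a b z) : wdzbar g z = b := by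
  simp only [wdzbar, h.fderiv, _root_.add_apply, _root_.smul_apply, ContinuousLinearMap.id_apply,
    ContinuousLinearEquiv.coe_coe, conjCLE_apply, map_one, conj_I, smul_eq_mul]
  linear_combination (a / 2 - b / 2) * I_mul_I

lemma of_differentiableAt (h : DifferentiableAt ℝ g z) :
    HasWirtingerDerivAt g (wdz g z) (wdzbar g z) z := by
  refine h.hasFDerivAt.congr_fderiv <| ContinuousLinearMap.coe_injective <|
    basisOneI.ext <| Fin.forall_fin_two.2 ⟨?_, ?_⟩
  · suffices fderiv ℝ g z 1 = wdz g z + wdzbar g z by simpa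
    rw [wdz, wdzbar]
    ring
  · suffices fderiv ℝ g z I = wdz g z * I - wdzbar g z * I by simpa [sub_eq_add_neg]
    rw [wdz, wdzbar]
    linear_combination fderiv ℝ g z I * I_mul_I

lemma congr_of_eventuallyEq (h : HasWirtingerDerivAt g a b z) (hk : k =ᶠ[𝓝 z] g) :
    HasWirtingerDerivAt k a b z :=
  HasFDerivAt.congr_of_eventuallyEq h hk

lemma add (hg : HasWirtingerDerivAt g a b z) (hk : HasWirtingerDerivAt k c d z) :
    HasWirtingerDerivAt (fun w => g w + k w) (a + c) (b + d) z := by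
  refine (HasFDerivAt.fun_add hg hk).congr_fderiv ?_
  module

lemma mul (hg : HasWirtingerDerivAt g a b z) (hk : HasWirtingerDerivAt k c d z) :
    HasWirtingerDerivAt (fun w => g w * k w) (a * k z + g z * c) (b * k z + g z * d) z := by
  refine (HasFDerivAt.fun_mul hg hk).congr_fderiv ?_
  module

lemma inner {E : Type*} [NormedAddCommGroup E] [InnerProductSpace ℂ E] {v w : ℂ → E} {v' w' : E}
    (hv : HasDerivAt v v' z) (hw : HasDerivAt w w' z) :
    HasWirtingerDerivAt (fun T => ⟪v T, w T⟫_ℂ) ⟪v z, w'⟫_ℂ ⟪v', w z⟫_ℂ z := by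
  refine ((hv.hasFDerivAt.restrictScalars ℝ).inner ℂ
    (hw.hasFDerivAt.restrictScalars ℝ)).congr_fderiv ?_
  ext T
  simp [inner_smul_left, inner_smul_right, mul_comm]

end HasWirtingerDerivAt

lemma differentiableAt_wdzbar {g : ℂ → ℂ} {z : ℂ} (hg : ContDiffAt ℝ 2 g z) :
    DifferentiableAt ℝ (wdzbar g) z := by
  have hdg : DifferentiableAt ℝ (fderiv ℝ g) z :=
    (hg.fderiv_right (m := 1) le_rfl).differentiableAt one_ne_zero
  unfold wdzbar
  fun_prop

end Wirtinger

section WeightedNormSq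

variable {E F : Type*} [NormedAddCommGroup E] [InnerProductSpace ℂ E]
  [NormedAddCommGroup F] [InnerProductSpace ℂ F]
  {a : ℂ → ℝ} {g : ℂ → F} {Y : ℂ → E} {z : ℂ}

/-- The density `a ‖g‖² + ‖Y‖²` of a conformal metric built from vector-valued functions `g`, `Y`
and a weight `a`; the leafwise metric of a holomorphic vector field has this form. -/
def weightedNormSq (a : ℂ → ℝ) (g : ℂ → F) (Y : ℂ → E) (T : ℂ) : ℝ :=
  a T * ‖g T‖ ^ 2 + ‖Y T‖ ^ 2

lemma ofReal_weightedNormSq (a : ℂ → ℝ) (g : ℂ → F) (Y : ℂ → E) (T : ℂ) :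
    (weightedNormSq a g Y T : ℂ) = a T * ⟪g T, g T⟫_ℂ + ⟪Y T, Y T⟫_ℂ := by
  simp [weightedNormSq, inner_self_eq_norm_sq_to_K]

lemma hasWirtingerDerivAt_weightedNormSq (ha : DifferentiableAt ℝ a z)
    (hg : DifferentiableAt ℂ g z) (hY : DifferentiableAt ℂ Y z) :
    HasWirtingerDerivAt (fun T => (weightedNormSq a g Y T : ℂ))
      (wdzR a z * ⟪g z, g z⟫_ℂ + a z * ⟪g z, deriv g z⟫_ℂ + ⟪Y z, deriv Y z⟫_ℂ)
      (wdzbarR a z * ⟪g z, g z⟫_ℂ + a z * ⟪deriv g z, g z⟫_ℂ + ⟪deriv Y z, Y z⟫_ℂ) z := by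
  simp only [ofReal_weightedNormSq]
  have ha' : DifferentiableAt ℝ (fun T => (a T : ℂ)) z := ofRealCLM.differentiableAt.comp z ha
  exact ((HasWirtingerDerivAt.of_differentiableAt ha').mul
    (.inner hg.hasDerivAt hg.hasDerivAt)).add (.inner hY.hasDerivAt hY.hasDerivAt)

variable [CompleteSpace E] [CompleteSpace F]

lemma wlapR_weightedNormSq_of_eq_zero (ha : ContDiffAt ℝ 2 a z) (hg : AnalyticAt ℂ g z)
    (hgz : g z = 0) (hY : AnalyticAt ℂ Y z) :
    wlapR (weightedNormSq a g Y) z =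
      a z * ⟪deriv g z, deriv g z⟫_ℂ + ⟪deriv Y z, deriv Y z⟫_ℂ := by
  have hbar : wdzbarR (weightedNormSq a g Y) =ᶠ[𝓝 z] fun T =>
      wdzbarR a T * ⟪g T, g T⟫_ℂ + a T * ⟪deriv g T, g T⟫_ℂ + ⟪deriv Y T, Y T⟫_ℂ := by
    filter_upwards [ha.eventually (by simp), hg.eventually_analyticAt, hY.eventually_analyticAt]
      with T haT hgT hYT
    exact (hasWirtingerDerivAt_weightedNormSq (haT.differentiableAt two_ne_zero)
      hgT.differentiableAt hYT.differentiableAt).wdzbar_eq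
  have ha' : ContDiffAt ℝ 2 (fun T => (a T : ℂ)) z := ofRealCLM.contDiff.contDiffAt.comp z ha
  have hg₁ := hg.differentiableAt.hasDerivAt
  have hY₁ := hY.differentiableAt.hasDerivAt
  have hderiv :=
    (((HasWirtingerDerivAt.of_differentiableAt (differentiableAt_wdzbar ha')).mul
      (.inner hg₁ hg₁)).add
    ((HasWirtingerDerivAt.of_differentiableAt (ha'.differentiableAt two_ne_zero)).mul
      (.inner hg.deriv.differentiableAt.hasDerivAt hg₁))).add
    (.inner hY.deriv.differentiableAt.hasDerivAt hY₁)
  simpa [wlapR, hgz] using (hderiv.congr_of_eventuallyEq hbar).wdz_eq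

lemma curvNum_weightedNormSq_of_eq_zero (ha : ContDiffAt ℝ 2 a z) (hg : AnalyticAt ℂ g z)
    (hgz : g z = 0) (hY : AnalyticAt ℂ Y z) :
    curvNum (weightedNormSq a g Y) z =
      ((a z * ‖deriv g z‖ ^ 2 * ‖Y z‖ ^ 2 +
        (‖Y z‖ ^ 2 * ‖deriv Y z‖ ^ 2 - ‖⟪Y z, deriv Y z⟫_ℂ‖ ^ 2) : ℝ) : ℂ) := by
  have hderiv := hasWirtingerDerivAt_weightedNormSq (ha.differentiableAt two_ne_zero)
    hg.differentiableAt hY.differentiableAt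
  have hz : wdzR (weightedNormSq a g Y) z = ⟪Y z, deriv Y z⟫_ℂ := by
    simpa [wdzR, hgz] using hderiv.wdz_eq
  have hzbar : wdzbarR (weightedNormSq a g Y) z = ⟪deriv Y z, Y z⟫_ℂ := by
    simpa [wdzbarR, hgz] using hderiv.wdzbar_eq
  have hnorm : ⟪Y z, deriv Y z⟫_ℂ * ⟪deriv Y z, Y z⟫_ℂ = (‖⟪Y z, deriv Y z⟫_ℂ‖ : ℂ) ^ 2 := by
    rw [← inner_conj_symm (deriv Y z), mul_conj']
  rw [curvNum, wlapR_weightedNormSq_of_eq_zero ha hg hgz hY, hz, hzbar, hnorm,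
    ofReal_weightedNormSq, hgz]
  simp only [inner_self_eq_norm_sq_to_K, coe_algebraMap, norm_zero]
  push_cast
  ring

lemma curvNum_weightedNormSq_nonneg_of_eq_zero (ha : ContDiffAt ℝ 2 a z) (haz : 0 ≤ a z)
    (hg : AnalyticAt ℂ g z) (hgz : g z = 0) (hY : AnalyticAt ℂ Y z) :
    0 ≤ curvNum (weightedNormSq a g Y) z := by
  rw [curvNum_weightedNormSq_of_eq_zero ha hg hgz hY, zero_le_real]
  have cauchy_schwarz : ‖⟪Y z, deriv Y z⟫_ℂ‖ ^ 2 ≤ ‖Y z‖ ^ 2 * ‖deriv Y z‖ ^ 2 := by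
    rw [← mul_pow]
    gcongr
    exact norm_inner_le_norm _ _
  exact add_nonneg (by positivity) (sub_nonneg.2 cauchy_schwarz)

end WeightedNormSq

section Weight

lemma analyticAt_dslope {𝕜 E : Type*} [NontriviallyNormedField 𝕜] [NormedAddCommGroup E]
    [NormedSpace 𝕜 E] {f : 𝕜 → E} {a b : 𝕜} (ha : AnalyticAt 𝕜 f a) (hb : AnalyticAt 𝕜 f b) :
    AnalyticAt 𝕜 (dslope f a) b := by
  rcases eq_or_ne b a with rfl | hba
  · obtain ⟨p, hp⟩ := ha
    exact ⟨_, hp.has_fpower_series_dslope_fslope⟩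
  · have hslope : AnalyticAt 𝕜 (slope f a) b :=
      ((analyticAt_id.sub analyticAt_const).inv (sub_ne_zero.2 hba)).smul
        (hb.sub analyticAt_const)
    exact hslope.congr (dslope_eventuallyEq_slope_of_ne f hba).symm

lemma dslope_log_one_ne_zero {t : ℝ} (ht : 0 < t) : dslope Real.log 1 t ≠ 0 := by
  rcases eq_or_ne t 1 with rfl | ht₁
  · simp [dslope_same]
  · rw [dslope_of_ne _ ht₁, slope_def_field, Real.log_one, sub_zero]
    exact div_ne_zero (Real.log_ne_zero_of_pos_of_ne_one ht ht₁) (sub_ne_zero.2 ht₁)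

lemma u_eq_inv_mul_dslope_log (t : ℝ) : u t = (t * dslope Real.log 1 t)⁻¹ := by
  rcases eq_or_ne t 1 with rfl | ht₁
  · simp [u, dslope_same]
  · rw [u, if_neg ht₁, dslope_of_ne _ ht₁, slope_def_field, Real.log_one, sub_zero,
      ← mul_div_assoc, inv_div]

lemma analyticAt_u {t : ℝ} (ht : 0 < t) : AnalyticAt ℝ u t := by
  rw [funext u_eq_inv_mul_dslope_log]
  exact (analyticAt_id.mul (analyticAt_dslope (analyticAt_log one_pos) (analyticAt_log ht))).inv
    (mul_ne_zero ht.ne' (dslope_log_one_ne_zero ht))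

lemma contDiffAt_one_add_norm_sq_mul_u_sq {G F : Type*} [NormedAddCommGroup G] [NormedSpace ℝ G]
    [NormedAddCommGroup F] [InnerProductSpace ℂ F] {n : WithTop ℕ∞} {φ : G → F} {x : G}
    (hφ : ContDiffAt ℝ n φ x) (hφx : φ x ≠ 0) :
    ContDiffAt ℝ n (fun y => 1 + ‖φ y‖ ^ 2 * u (‖φ y‖ ^ 2) ^ 2) x := by
  have hnorm : ContDiffAt ℝ n (fun y => ‖φ y‖ ^ 2) x := hφ.norm_sq ℂ
  have hu : ContDiffAt ℝ n u (‖φ x‖ ^ 2) := (analyticAt_u (by positivity)).contDiffAt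
  exact contDiffAt_const.add (hnorm.mul ((hu.comp x hnorm).pow 2))

end Weight

section Leaf

variable {E F : Type*} [NormedAddCommGroup E] [NormedAddCommGroup F]

lemma analyticAt_of_eventually_hasDerivAt [NormedSpace ℂ E] [CompleteSpace E] {Z Y : ℂ → E}
    {z : ℂ} (hZ : ∀ᶠ T in 𝓝 z, HasDerivAt Z (Y T) T) : AnalyticAt ℂ Y z :=
  (analyticAt_iff_eventually_differentiableAt.2
    (hZ.mono fun _ h => h.differentiableAt)).deriv.congr (hZ.mono fun _ h => h.deriv)

theorem stmt2_general [InnerProductSpace ℂ E] [CompleteSpace E] [InnerProductSpace ℂ F]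
    [CompleteSpace F] {f : E → F} {X : E → E} {Z : ℂ → E} {z : ℂ}
    (hZ : ∀ᶠ T in 𝓝 z, HasDerivAt Z (X (Z T)) T)
    (hf : ∀ᶠ T in 𝓝 z, DifferentiableAt ℂ f (Z T))
    (hfz : f (Z z) ≠ 0) (hdf : fderiv ℂ f (Z z) (X (Z z)) = 0) :
    0 ≤ curvNum (fun T =>
      (1 + ‖f (Z T)‖ ^ 2 * u (‖f (Z T)‖ ^ 2) ^ 2) *
        ‖fderiv ℂ f (Z T) (X (Z T))‖ ^ 2 + ‖X (Z T)‖ ^ 2) z := by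
  have hfZ : ∀ᶠ T in 𝓝 z, HasDerivAt (f ∘ Z) (fderiv ℂ f (Z T) (X (Z T))) T := by
    filter_upwards [hZ, hf] with T hZT hfT
    exact hfT.hasFDerivAt.comp_hasDerivAt T hZT
  have hfZ_analytic : AnalyticAt ℂ (f ∘ Z) z :=
    analyticAt_iff_eventually_differentiableAt.2 (hfZ.mono fun _ h => h.differentiableAt)
  have hweight := contDiffAt_one_add_norm_sq_mul_u_sq (n := 2)
    (hfZ_analytic.contDiffAt.restrict_scalars ℝ) hfz
  exact curvNum_weightedNormSq_nonneg_of_eq_zero hweight (by positivity)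
    (analyticAt_of_eventually_hasDerivAt hfZ) hdf (analyticAt_of_eventually_hasDerivAt hZ)

end Leaf

/-- if `df(p) = 0`, then along every leaf through `p` of every
non-singular holomorphic vector field, the Gaussian curvature of the leafwise
metric at `T = 0` is `≤ 0` (numerator `≥ 0`). -/
theorem stmt2 (n : ℕ) (hn : 2 ≤ n)
    (f : EuclideanSpace ℂ (Fin n) → ℂ) (hf : Differentiable ℂ f)
    (p : EuclideanSpace ℂ (Fin n)) (hfp : f p ≠ 0)
    (hdf : fderiv ℂ f p = 0) :
    ∀ (V : Set (EuclideanSpace ℂ (Fin n))), IsOpen V → p ∈ V →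
    ∀ (X : EuclideanSpace ℂ (Fin n) → EuclideanSpace ℂ (Fin n)),
      DifferentiableOn ℂ X V → X p ≠ 0 →
    ∀ (ε : ℝ), 0 < ε →
    ∀ (Z : ℂ → EuclideanSpace ℂ (Fin n)),
      DifferentiableOn ℂ Z (Metric.ball 0 ε) →
      Z 0 = p →
      (∀ T ∈ Metric.ball (0 : ℂ) ε, Z T ∈ V) →
      (∀ T ∈ Metric.ball (0 : ℂ) ε, deriv Z T = X (Z T)) →
      (∀ T ∈ Metric.ball (0 : ℂ) ε, f (Z T) ≠ 0) →
      0 ≤ curvNum (fun T =>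
        (1 + ‖f (Z T)‖ ^ 2 * u (‖f (Z T)‖ ^ 2) ^ 2) *
          ‖fderiv ℂ f (Z T) (X (Z T))‖ ^ 2 + ‖X (Z T)‖ ^ 2) 0 := by
  intro V _ _ X _ _ ε hε Z hZ hZ0 _ hZ' _
  have hball : ∀ᶠ T in 𝓝 (0 : ℂ), T ∈ ball 0 ε := ball_mem_nhds 0 hε
  refine stmt2_general (hball.mono fun T hT => ?_) (.of_forall fun T => hf (Z T))
    (by rwa [hZ0]) (by simp [hZ0, hdf])
  exact hZ' T hT ▸ (hZ.differentiableAt (isOpen_ball.mem_nhds hT)).hasDerivAt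
end

section
/- Let Ω ⊆ ℂ∖{0} be open and let ψ : Ω → ℂ be holomorphic. Define h : Ω → ℝ by h(w) = 1 + |w|²·u(|w|²)² + |ψ(w)|². Then for every w ∈ Ω, h(w)·(∂∂̄h)(w) − (∂h)(w)·(∂̄h)(w) ≥ 0; equivalently, the Gaussian curvature of the conformal metric h(w)|dw|² is ≤ 0 everywhere on Ω. -/
open Complex Filter Topology Metric
open scoped ComplexOrder

/-!
The number `h·∂∂̄h − ∂h·∂̄h` is the determinant of the matrix with rows `(h, ∂h)` and `(∂̄h, ∂∂̄h)`,
which depends additively on `h`, so it suffices that each summand of `h` has a positive semidefinite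
matrix. For the squared norm of a holomorphic `f` it is the Gram matrix of `f` and `f'`; this covers
`1` and `|ψ|²`. For the middle summand, `(t - 1) / log t = ∫₀¹ tˣ dx` gives
`|w|²·u(|w|²)² = φ(log |w|²)`, where `φ` is the moment generating function of the sum `X` of two
independent uniform variables on `[-1/2, 1/2]`. Since `log |w|²` is harmonic, its matrix is
congruent to the one with rows `(φ, φ')` and `(φ', φ'')`, whose quadratic form at `s` is
`x ↦ 𝔼[(x₀ + x₁X)² exp(sX)] ≥ 0`.
-/

open MeasureTheory ProbabilityTheory Matrix
open scoped ComplexConjugate InnerProductSpace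

section Wirtinger

variable {f g : ℂ → ℂ} {F H : ℂ → ℝ} {φ : ℝ → ℝ} {z : ℂ}

lemma wdz_congr (h : f =ᶠ[𝓝 z] g) : wdz f z = wdz g z := by
  simp only [wdz, h.fderiv_eq]

lemma wdzbar_congr (h : f =ᶠ[𝓝 z] g) : wdzbar f z = wdzbar g z := by
  simp only [wdzbar, h.fderiv_eq]

lemma wdz_add (hf : DifferentiableAt ℝ f z) (hg : DifferentiableAt ℝ g z) :
    wdz (fun v => f v + g v) z = wdz f z + wdz g z := by
  simp only [wdz, fderiv_fun_add hf hg, _root_.add_apply]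
  ring

lemma wdzbar_add (hf : DifferentiableAt ℝ f z) (hg : DifferentiableAt ℝ g z) :
    wdzbar (fun v => f v + g v) z = wdzbar f z + wdzbar g z := by
  simp only [wdzbar, fderiv_fun_add hf hg, _root_.add_apply]
  ring

lemma wdz_mul (hf : DifferentiableAt ℝ f z) (hg : DifferentiableAt ℝ g z) :
    wdz (fun v => f v * g v) z = f z * wdz g z + wdz f z * g z := by
  simp only [wdz, fderiv_fun_mul hf hg, _root_.add_apply, _root_.smul_apply, smul_eq_mul]
  ring

lemma differentiableAt_ofReal_comp (hF : DifferentiableAt ℝ F z) :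
    DifferentiableAt ℝ (fun w => (F w : ℂ)) z :=
  ofRealCLM.differentiableAt.comp z hF

lemma fderiv_ofReal_comp (hF : DifferentiableAt ℝ F z) (v : ℂ) :
    fderiv ℝ (fun w => (F w : ℂ)) z v = fderiv ℝ F z v := by
  have hderiv := (ofRealCLM.hasFDerivAt.comp z hF.hasFDerivAt).fderiv
  exact congrArg (· v) hderiv

lemma conj_wdzbarR (hF : DifferentiableAt ℝ F z) : conj (wdzbarR F z) = wdzR F z := by
  simp only [wdzbarR, wdzR, wdz, wdzbar, fderiv_ofReal_comp hF, map_div₀, map_add, map_mul,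
    conj_ofReal, conj_I, conj_ofNat]
  ring

lemma wdzR_add (hF : DifferentiableAt ℝ F z) (hH : DifferentiableAt ℝ H z) :
    wdzR (fun v => F v + H v) z = wdzR F z + wdzR H z := by
  simpa only [wdzR, ofReal_add] using
    wdz_add (differentiableAt_ofReal_comp hF) (differentiableAt_ofReal_comp hH)

lemma wdzbarR_add (hF : DifferentiableAt ℝ F z) (hH : DifferentiableAt ℝ H z) :
    wdzbarR (fun v => F v + H v) z = wdzbarR F z + wdzbarR H z := by
  simpa only [wdzbarR, ofReal_add] using
    wdzbar_add (differentiableAt_ofReal_comp hF) (differentiableAt_ofReal_comp hH)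

lemma wdzR_comp (hφ : DifferentiableAt ℝ φ (F z)) (hF : DifferentiableAt ℝ F z) :
    wdzR (fun v => φ (F v)) z = deriv φ (F z) * wdzR F z := by
  have hcomp : HasFDerivAt (fun v => φ (F v)) (deriv φ (F z) • fderiv ℝ F z) z :=
    hφ.hasDerivAt.comp_hasFDerivAt z hF.hasFDerivAt
  simp only [wdzR, wdz, fderiv_ofReal_comp hcomp.differentiableAt, fderiv_ofReal_comp hF,
    hcomp.fderiv, _root_.smul_apply, smul_eq_mul, ofReal_mul]
  ring

lemma wdzbarR_comp (hφ : DifferentiableAt ℝ φ (F z)) (hF : DifferentiableAt ℝ F z) :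
    wdzbarR (fun v => φ (F v)) z = deriv φ (F z) * wdzbarR F z := by
  have hcomp : DifferentiableAt ℝ (fun v => φ (F v)) z := hφ.comp z hF
  have hconj := congrArg conj (wdzR_comp hφ hF)
  rwa [← conj_wdzbarR hcomp, ← conj_wdzbarR hF, map_mul, conj_conj, conj_conj, conj_ofReal] at hconj

lemma differentiableAt_wdzbarR (hF : ContDiffAt ℝ 2 F z) :
    DifferentiableAt ℝ (wdzbarR F) z := by
  have hfderiv : DifferentiableAt ℝ (fderiv ℝ fun v => (F v : ℂ)) z :=
    ((ofRealCLM.contDiff.contDiffAt.comp z hF).fderiv_right (m := 1) le_rfl).differentiableAt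
      one_ne_zero
  unfold wdzbarR wdzbar
  fun_prop

lemma wlapR_add (hF : ContDiffAt ℝ 2 F z) (hH : ContDiffAt ℝ 2 H z) :
    wlapR (fun v => F v + H v) z = wlapR F z + wlapR H z := by
  have heq : wdzbarR (fun v => F v + H v) =ᶠ[𝓝 z] fun v => wdzbarR F v + wdzbarR H v := by
    filter_upwards [hF.eventually (by simp), hH.eventually (by simp)] with v hFv hHv
    exact wdzbarR_add (hFv.differentiableAt two_ne_zero) (hHv.differentiableAt two_ne_zero)
  rw [wlapR, wdz_congr heq, wdz_add (differentiableAt_wdzbarR hF) (differentiableAt_wdzbarR hH),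
    wlapR, wlapR]

lemma wlapR_comp (hφ : ContDiffAt ℝ 2 φ (F z)) (hF : ContDiffAt ℝ 2 F z) :
    wlapR (fun v => φ (F v)) z =
      deriv φ (F z) * wlapR F z + deriv (deriv φ) (F z) * wdzR F z * wdzbarR F z := by
  have hdF : DifferentiableAt ℝ F z := hF.differentiableAt two_ne_zero
  have hdφ : DifferentiableAt ℝ (deriv φ) (F z) :=
    (hφ.derivWithin (m := 1) le_rfl).differentiableAt one_ne_zero
  have heq : wdzbarR (fun v => φ (F v)) =ᶠ[𝓝 z]
      fun v => ((deriv φ (F v) : ℝ) : ℂ) * wdzbarR F v := by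
    filter_upwards [hF.eventually (by simp),
      hF.continuousAt.eventually (hφ.eventually (by simp))] with v hFv hφv
    exact wdzbarR_comp (hφv.differentiableAt two_ne_zero) (hFv.differentiableAt two_ne_zero)
  have hdφF : DifferentiableAt ℝ (fun v => deriv φ (F v)) z := hdφ.comp z hdF
  calc wlapR (fun v => φ (F v)) z
    _ = wdz (fun v => ((deriv φ (F v) : ℝ) : ℂ) * wdzbarR F v) z := wdz_congr heq
    _ = deriv φ (F z) * wlapR F z + wdzR (fun v => deriv φ (F v)) z * wdzbarR F z :=
      wdz_mul (differentiableAt_ofReal_comp hdφF) (differentiableAt_wdzbarR hF)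
    _ = deriv φ (F z) * wlapR F z + deriv (deriv φ) (F z) * wdzR F z * wdzbarR F z := by
      rw [wdzR_comp hdφ hdF]

end Wirtinger

section Holomorphic

variable {E : Type*} [NormedAddCommGroup E] [InnerProductSpace ℂ E]
  {f g : ℂ → E} {f' g' : E} {z : ℂ}

lemma fderiv_inner_of_hasDerivAt (hf : HasDerivAt f f' z) (hg : HasDerivAt g g' z) (v : ℂ) :
    fderiv ℝ (fun w => ⟪f w, g w⟫_ℂ) z v = v * ⟪f z, g'⟫_ℂ + conj v * ⟪f', g z⟫_ℂ := by
  have hderiv := (hf.hasFDerivAt.restrictScalars ℝ).inner ℂ (hg.hasFDerivAt.restrictScalars ℝ)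
  simp [hderiv.fderiv, inner_smul_left, inner_smul_right]

lemma wdz_inner (hf : HasDerivAt f f' z) (hg : HasDerivAt g g' z) :
    wdz (fun w => ⟪f w, g w⟫_ℂ) z = ⟪f z, g'⟫_ℂ := by
  simp only [wdz, fderiv_inner_of_hasDerivAt hf hg, map_one, conj_I]
  linear_combination (⟪f', g z⟫_ℂ - ⟪f z, g'⟫_ℂ) / 2 * I_sq

lemma wdzbar_inner (hf : HasDerivAt f f' z) (hg : HasDerivAt g g' z) :
    wdzbar (fun w => ⟪f w, g w⟫_ℂ) z = ⟪f', g z⟫_ℂ := by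
  simp only [wdzbar, fderiv_inner_of_hasDerivAt hf hg, map_one, conj_I]
  linear_combination (⟪f z, g'⟫_ℂ - ⟪f', g z⟫_ℂ) / 2 * I_sq

lemma wdzR_norm_sq (hf : HasDerivAt f f' z) : wdzR (fun w => ‖f w‖ ^ 2) z = ⟪f z, f'⟫_ℂ := by
  simpa [wdzR, inner_self_eq_norm_sq_to_K] using wdz_inner hf hf

lemma wdzbarR_norm_sq (hf : HasDerivAt f f' z) :
    wdzbarR (fun w => ‖f w‖ ^ 2) z = ⟪f', f z⟫_ℂ := by
  simpa [wdzbarR, inner_self_eq_norm_sq_to_K] using wdzbar_inner hf hf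

lemma contDiffAt_norm_sq_of_analyticAt [CompleteSpace E] {n : WithTop ℕ∞} (hf : AnalyticAt ℂ f z) :
    ContDiffAt ℝ n (fun w => ‖f w‖ ^ 2) z :=
  (hf.contDiffAt.restrict_scalars ℝ).norm_sq ℂ

lemma wlapR_norm_sq [CompleteSpace E] (hf : AnalyticAt ℂ f z) :
    wlapR (fun w => ‖f w‖ ^ 2) z = ⟪deriv f z, deriv f z⟫_ℂ := by
  have heq : wdzbarR (fun w => ‖f w‖ ^ 2) =ᶠ[𝓝 z] fun w => ⟪deriv f w, f w⟫_ℂ := by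
    filter_upwards [hf.eventually_analyticAt] with w hw
    exact wdzbarR_norm_sq hw.differentiableAt.hasDerivAt
  rw [wlapR, wdz_congr heq,
    wdz_inner hf.deriv.differentiableAt.hasDerivAt hf.differentiableAt.hasDerivAt]

end Holomorphic

section LogNorm

variable {f : ℂ → ℂ} {z : ℂ}

lemma contDiffAt_log_norm_sq_of_analyticAt {n : WithTop ℕ∞} (hf : AnalyticAt ℂ f z)
    (hfz : f z ≠ 0) : ContDiffAt ℝ n (fun w => Real.log (‖f w‖ ^ 2)) z :=
  (contDiffAt_norm_sq_of_analyticAt hf).log (by positivity)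

lemma wdzbarR_log_norm_sq {f' : ℂ} (hf : HasDerivAt f f' z) (hfz : f z ≠ 0) :
    wdzbarR (fun w => Real.log (‖f w‖ ^ 2)) z = conj (f' / f z) := by
  have hnorm : ‖f z‖ ^ 2 ≠ 0 := by positivity
  have hdiff : DifferentiableAt ℝ (fun w => ‖f w‖ ^ 2) z :=
    (hf.differentiableAt.restrictScalars ℝ).norm_sq ℂ
  have hconj : conj (f z) ≠ 0 := by simpa using hfz
  rw [wdzbarR_comp (Real.differentiableAt_log hnorm) hdiff, wdzbarR_norm_sq hf, Real.deriv_log,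
    ← normSq_eq_norm_sq, ofReal_inv, ← mul_conj, RCLike.inner_apply, map_div₀]
  field_simp

lemma wlapR_log_norm_sq (hf : AnalyticAt ℂ f z) (hfz : f z ≠ 0) :
    wlapR (fun w => Real.log (‖f w‖ ^ 2)) z = 0 := by
  have heq : wdzbarR (fun w => Real.log (‖f w‖ ^ 2)) =ᶠ[𝓝 z]
      fun w => ⟪deriv f w / f w, 1⟫_ℂ := by
    filter_upwards [hf.eventually_analyticAt, hf.continuousAt.eventually_ne hfz] with w hw hfw
    simpa using wdzbarR_log_norm_sq hw.differentiableAt.hasDerivAt hfw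
  rw [wlapR, wdz_congr heq, wdz_inner (hf.deriv.fun_div hf hfz).differentiableAt.hasDerivAt
    (hasDerivAt_const z 1), inner_zero_right]

end LogNorm

section Jet

variable {F H : ℂ → ℝ} {φ : ℝ → ℝ} {z : ℂ}

/-- The second-order Wirtinger data of `h` at `z`, arranged so that `curvNum h z` is the
determinant. For `h z > 0`, positive semidefiniteness is the infinitesimal form of `log h` being
subharmonic, and unlike the sign of `curvNum` it is visibly stable under sums. -/
noncomputable def wirtingerJet (h : ℂ → ℝ) (z : ℂ) : Matrix (Fin 2) (Fin 2) ℂ :=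
  !![(h z : ℂ), wdzR h z; wdzbarR h z, wlapR h z]

/-- The Hankel matrix of the derivatives of `φ` at `s` up to order two. For `φ s > 0`, positive
semidefiniteness is the infinitesimal form of log-convexity, `φ'² ≤ φ φ''`. -/
noncomputable def derivHankel (φ : ℝ → ℝ) (s : ℝ) : Matrix (Fin 2) (Fin 2) ℝ :=
  !![φ s, deriv φ s; deriv φ s, deriv (deriv φ) s]

lemma det_wirtingerJet (h : ℂ → ℝ) (z : ℂ) : (wirtingerJet h z).det = curvNum h z := by
  rw [wirtingerJet, det_fin_two_of, curvNum]

lemma wirtingerJet_congr (h : F =ᶠ[𝓝 z] H) : wirtingerJet F z = wirtingerJet H z := by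
  have hcast : ∀ᶠ v in 𝓝 z, (fun w => (F w : ℂ)) =ᶠ[𝓝 v] fun w => (H w : ℂ) :=
    (h.fun_comp ofReal).eventuallyEq_nhds
  have hbar : wdzbarR F =ᶠ[𝓝 z] wdzbarR H := hcast.mono fun _ => wdzbar_congr
  rw [wirtingerJet, wirtingerJet, h.eq_of_nhds, hbar.eq_of_nhds, wlapR, wlapR, wdz_congr hbar,
    wdzR, wdzR, wdz_congr hcast.self_of_nhds]

lemma wirtingerJet_add (hF : ContDiffAt ℝ 2 F z) (hH : ContDiffAt ℝ 2 H z) :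
    wirtingerJet (fun v => F v + H v) z = wirtingerJet F z + wirtingerJet H z := by
  have hdF := hF.differentiableAt two_ne_zero
  have hdH := hH.differentiableAt two_ne_zero
  simp [wirtingerJet, wdzR_add hdF hdH, wdzbarR_add hdF hdH, wlapR_add hF hH]

lemma wirtingerJet_norm_sq {E : Type*} [NormedAddCommGroup E] [InnerProductSpace ℂ E]
    [CompleteSpace E] {f : ℂ → E} (hf : AnalyticAt ℂ f z) :
    wirtingerJet (fun w => ‖f w‖ ^ 2) z = gram ℂ ![f z, deriv f z] := by
  have hd := hf.differentiableAt.hasDerivAt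
  rw [wirtingerJet, wdzR_norm_sq hd, wdzbarR_norm_sq hd, wlapR_norm_sq hf]
  ext i j
  fin_cases i <;> fin_cases j <;> simp [inner_self_eq_norm_sq_to_K]

lemma posSemidef_wirtingerJet_norm_sq {E : Type*} [NormedAddCommGroup E] [InnerProductSpace ℂ E]
    [CompleteSpace E] {f : ℂ → E} (hf : AnalyticAt ℂ f z) :
    (wirtingerJet (fun w => ‖f w‖ ^ 2) z).PosSemidef :=
  wirtingerJet_norm_sq hf ▸ posSemidef_gram ℂ _

lemma wirtingerJet_comp_of_wlapR_eq_zero (hφ : ContDiffAt ℝ 2 φ (F z)) (hF : ContDiffAt ℝ 2 F z)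
    (hharm : wlapR F z = 0) :
    wirtingerJet (fun v => φ (F v)) z =
      diagonal ![1, wdzbarR F z] * (derivHankel φ (F z)).map ofReal *
        (diagonal ![1, wdzbarR F z])ᴴ := by
  have hdφ := hφ.differentiableAt two_ne_zero
  have hdF := hF.differentiableAt two_ne_zero
  rw [wirtingerJet, wdzR_comp hdφ hdF, wdzbarR_comp hdφ hdF, wlapR_comp hφ hF, hharm,
    ← conj_wdzbarR hdF]
  ext i j
  fin_cases i <;> fin_cases j <;> simp [derivHankel, diagonal_conjTranspose] <;> ring

open scoped MatrixOrder in
lemma posSemidef_map_ofReal {n : Type*} [Finite n] {A : Matrix n n ℝ} (hA : A.PosSemidef) :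
    (A.map ofReal).PosSemidef := by
  classical
  cases nonempty_fintype n
  obtain ⟨B, rfl⟩ := CStarAlgebra.nonneg_iff_eq_star_mul_self.mp hA.nonneg
  have hmap : (star B * B).map ofReal = (B.map ofReal)ᴴ * B.map ofReal := by
    ext i j
    simp [Matrix.mul_apply, star_eq_conjTranspose]
  rw [hmap]
  exact posSemidef_conjTranspose_mul_self _

lemma posSemidef_wirtingerJet_comp (hφ : ContDiffAt ℝ 2 φ (F z)) (hF : ContDiffAt ℝ 2 F z)
    (hharm : wlapR F z = 0) (hpos : (derivHankel φ (F z)).PosSemidef) :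
    (wirtingerJet (fun v => φ (F v)) z).PosSemidef := by
  rw [wirtingerJet_comp_of_wlapR_eq_zero hφ hF hharm]
  exact (posSemidef_map_ofReal hpos).mul_mul_conjTranspose_same _

end Jet

section MGF

variable {Ω : Type*} [MeasurableSpace Ω] {X : Ω → ℝ} {μ : Measure Ω} {s : ℝ}

lemma deriv_deriv_mgf (hs : s ∈ interior (integrableExpSet X μ)) :
    deriv (deriv (mgf X μ)) s = ∫ ω, X ω ^ 2 * Real.exp (s * X ω) ∂μ := by
  rw [← iteratedDeriv_mgf hs 2, iteratedDeriv_succ, iteratedDeriv_one]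

lemma posSemidef_derivHankel_mgf (hs : s ∈ interior (integrableExpSet X μ)) :
    (derivHankel (mgf X μ) s).PosSemidef := by
  have hint (n : ℕ) : Integrable (fun ω => X ω ^ n * Real.exp (s * X ω)) μ :=
    integrable_pow_mul_exp_of_mem_interior_integrableExpSet hs n
  have h0 : Integrable (fun ω => Real.exp (s * X ω)) μ := by simpa using hint 0
  have h1 : Integrable (fun ω => X ω * Real.exp (s * X ω)) μ := by simpa using hint 1
  refine .of_dotProduct_mulVec_nonneg (by ext i j; fin_cases i <;> fin_cases j <;> rfl) fun x => ?_
  have hquad : star x ⬝ᵥ (derivHankel (mgf X μ) s *ᵥ x) =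
      ∫ ω, (x 0 + x 1 * X ω) ^ 2 * Real.exp (s * X ω) ∂μ := by
    calc star x ⬝ᵥ (derivHankel (mgf X μ) s *ᵥ x)
      _ = x 0 ^ 2 * mgf X μ s + 2 * x 0 * x 1 * deriv (mgf X μ) s
          + x 1 ^ 2 * deriv (deriv (mgf X μ)) s := by
        simp only [derivHankel, dotProduct, mulVec, Fin.sum_univ_two, of_apply, cons_val_zero,
          cons_val_one, Pi.star_apply, star_trivial]
        ring
      _ = ∫ ω, x 0 ^ 2 * Real.exp (s * X ω) + 2 * x 0 * x 1 * (X ω * Real.exp (s * X ω))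
          + x 1 ^ 2 * (X ω ^ 2 * Real.exp (s * X ω)) ∂μ := by
        rw [integral_add (by fun_prop) ((hint 2).const_mul _), integral_add (h0.const_mul _)
          (h1.const_mul _), integral_const_mul, integral_const_mul, integral_const_mul,
          deriv_mgf hs, deriv_deriv_mgf hs, mgf]
      _ = _ := by
        congr with ω
        ring
  rw [hquad]
  exact integral_nonneg fun ω => by positivity

lemma mgf_sq_eq_mgf_prod [SFinite μ] :
    mgf X μ s ^ 2 = mgf (fun p : Ω × Ω => X p.1 + X p.2) (μ.prod μ) s := by
  simp only [mgf, mul_add, Real.exp_add, sq]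
  exact (integral_prod_mul _ _).symm

end MGF

/-- The uniform distribution on `[-1/2, 1/2]`, whose moment generating function at `log t` is
`√t * u t`. -/
noncomputable def centeredUniform : Measure ℝ := volume.restrict (Set.Icc (-1 / 2) (1 / 2))

instance : IsFiniteMeasure centeredUniform :=
  inferInstanceAs (IsFiniteMeasure (volume.restrict _))

lemma mgf_centeredUniform (s : ℝ) :
    mgf id centeredUniform s = ∫ x in (-1 / 2 : ℝ)..(1 / 2), Real.exp (s * x) := by
  rw [mgf, centeredUniform, integral_Icc_eq_integral_Ioc,
    intervalIntegral.integral_of_le (by norm_num)]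
  rfl

lemma mul_u_sq_eq_mgf_sq {t : ℝ} (ht : 0 < t) :
    t * u t ^ 2 = mgf id centeredUniform (Real.log t) ^ 2 := by
  rcases eq_or_ne t 1 with rfl | ht1
  · rw [Real.log_one, mgf_centeredUniform]
    norm_num [u]
  have hlog : Real.log t ≠ 0 := Real.log_ne_zero_of_pos_of_ne_one ht ht1
  have hmgf : mgf id centeredUniform (Real.log t) = (√t - (√t)⁻¹) / Real.log t := by
    rw [mgf_centeredUniform, intervalIntegral.integral_comp_mul_left _ hlog, integral_exp,
      smul_eq_mul, ← Real.rpow_def_of_pos ht, ← Real.rpow_def_of_pos ht, Real.sqrt_eq_rpow,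
      ← Real.rpow_neg ht.le, inv_mul_eq_div]
    norm_num
  have hsq : √t ^ 2 = t := Real.sq_sqrt ht.le
  rw [hmgf, u, if_neg ht1]
  field_simp
  rw [hsq]
  ring

/-- The moment generating function of `X + Y` for independent `X` and `Y` uniform on
`[-1/2, 1/2]`. -/
noncomputable def triangularMGF : ℝ → ℝ :=
  mgf (fun p : ℝ × ℝ => p.1 + p.2) (centeredUniform.prod centeredUniform)

lemma mul_u_sq_eq_triangularMGF {t : ℝ} (ht : 0 < t) :
    t * u t ^ 2 = triangularMGF (Real.log t) := by
  rw [mul_u_sq_eq_mgf_sq ht, mgf_sq_eq_mgf_prod]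
  rfl

lemma mem_interior_integrableExpSet_triangular (s : ℝ) :
    s ∈ interior (integrableExpSet (fun p : ℝ × ℝ => p.1 + p.2)
      (centeredUniform.prod centeredUniform)) := by
  have hbdd : ∀ᵐ p ∂centeredUniform.prod centeredUniform, p.1 + p.2 ∈ Set.Icc (-1 : ℝ) 1 := by
    rw [centeredUniform, Measure.prod_restrict]
    filter_upwards [ae_restrict_mem (measurableSet_Icc.prod measurableSet_Icc)] with p hp
    obtain ⟨⟨hx₁, hx₂⟩, hy₁, hy₂⟩ := hp
    constructor <;> linarith
  have huniv : integrableExpSet (fun p : ℝ × ℝ => p.1 + p.2)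
      (centeredUniform.prod centeredUniform) = Set.univ :=
    Set.eq_univ_of_forall fun _ => integrable_exp_mul_of_mem_Icc (by fun_prop) hbdd
  simp [huniv]

lemma posSemidef_derivHankel_triangularMGF (s : ℝ) : (derivHankel triangularMGF s).PosSemidef :=
  posSemidef_derivHankel_mgf (mem_interior_integrableExpSet_triangular s)

lemma contDiffAt_triangularMGF {n : WithTop ℕ∞} (s : ℝ) : ContDiffAt ℝ n triangularMGF s :=
  (analyticAt_mgf (mem_interior_integrableExpSet_triangular s)).contDiffAt

theorem stmt3_general {E : Type*} [NormedAddCommGroup E] [InnerProductSpace ℂ E] [CompleteSpace E]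
    (Ω : Set ℂ) (hΩ : IsOpen Ω) (hΩ0 : (0 : ℂ) ∉ Ω) (ψ : ℂ → E) (hψ : DifferentiableOn ℂ ψ Ω) :
    ∀ w ∈ Ω,
      0 ≤ curvNum (fun v => 1 + ‖v‖ ^ 2 * u (‖v‖ ^ 2) ^ 2 + ‖ψ v‖ ^ 2) w := by
  intro w hw
  have hw0 : w ≠ 0 := ne_of_mem_of_not_mem hw hΩ0
  have hψw : AnalyticAt ℂ ψ w := hψ.analyticAt (hΩ.mem_nhds hw)
  have hlog : ContDiffAt ℝ 2 (fun v : ℂ => Real.log (‖v‖ ^ 2)) w :=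
    contDiffAt_log_norm_sq_of_analyticAt analyticAt_id hw0
  have hradial : ContDiffAt ℝ 2 (fun v : ℂ => triangularMGF (Real.log (‖v‖ ^ 2))) w :=
    (contDiffAt_triangularMGF _).comp w hlog
  have hgerm : (fun v => 1 + ‖v‖ ^ 2 * u (‖v‖ ^ 2) ^ 2 + ‖ψ v‖ ^ 2) =ᶠ[𝓝 w]
      fun v => ‖(1 : ℂ)‖ ^ 2 + triangularMGF (Real.log (‖v‖ ^ 2)) + ‖ψ v‖ ^ 2 := by
    filter_upwards [eventually_ne_nhds hw0] with v hv
    rw [mul_u_sq_eq_triangularMGF (by positivity), norm_one, one_pow]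
  have hpsd_const : (wirtingerJet (fun _ => ‖(1 : ℂ)‖ ^ 2) w).PosSemidef :=
    posSemidef_wirtingerJet_norm_sq analyticAt_const
  have hpsd_radial : (wirtingerJet (fun v => triangularMGF (Real.log (‖v‖ ^ 2))) w).PosSemidef :=
    posSemidef_wirtingerJet_comp (contDiffAt_triangularMGF _) hlog
      (wlapR_log_norm_sq analyticAt_id hw0) (posSemidef_derivHankel_triangularMGF _)
  rw [← det_wirtingerJet, wirtingerJet_congr hgerm,
    wirtingerJet_add (contDiffAt_const.add hradial) (contDiffAt_norm_sq_of_analyticAt hψw),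
    wirtingerJet_add contDiffAt_const hradial]
  exact ((hpsd_const.add hpsd_radial).add (posSemidef_wirtingerJet_norm_sq hψw)).det_nonneg

/-- for `h(w) = 1 + |w|²u(|w|²)² + |ψ(w)|²` with `ψ` holomorphic on an
open `Ω ⊆ ℂ∖{0}`, the curvature numerator is everywhere nonnegative on `Ω`,
i.e. the Gaussian curvature of `h|dw|²` is `≤ 0` on `Ω`. -/
theorem stmt3 (Ω : Set ℂ) (hΩ : IsOpen Ω) (hΩ0 : (0 : ℂ) ∉ Ω)
    (ψ : ℂ → ℂ) (hψ : DifferentiableOn ℂ ψ Ω) :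
    ∀ w ∈ Ω,
      0 ≤ curvNum (fun v => 1 + ‖v‖ ^ 2 * u (‖v‖ ^ 2) ^ 2 + ‖ψ v‖ ^ 2) w := by
  exact stmt3_general Ω hΩ hΩ0 ψ hψ
end
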